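/- Let H, K be complex Hilbert spaces and let 𝓑 denote the open unit ball of B(K,H). For A ∈ 𝓑 define η(Z) = (I − AA*)^{−1/2}(Z + A)(I + A*Z)⁻¹(I − A*A)^{1/2} for Z ∈ 𝓑. Then η maps 𝓑 bijectively onto 𝓑 and its inverse is given by η⁻¹(Z) = (I − AA*)^{−1/2}(Z − A)(I − A*Z)⁻¹(I − A*A)^{1/2}. -/

import Mathlib

open ContinuousLinearMap

/-!
Let `D` and `D'` be the defect operators `(I - A*A)^{1/2}` and `(I - AA*)^{1/2}`. The intertwining
relation `D' A = A D` makes the Julia operator `[[A, D'], [D, -A*]]` isometric and turns the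
Möbius map into the linear fractional transformation `η(Z) = A + D' Z W D`, where
`W = (I + A*Z)⁻¹`. Feeding `(x, Z W D x)` into the Julia operator yields
`‖η(Z) x‖² + ‖W D x‖² = ‖x‖² + ‖Z W D x‖²`, so `η(Z)` is a strict contraction because `Z` is one
and `W D` is invertible. Since moreover `η(Z) - A = D' Z W D` and `I - A* η(Z) = D W D`, the Möbius
map of `-A` sends `η(Z)` back to `Z`.
-/

theorem inverse_one_add_eq_one_sub {R : Type*} [Ring R] {b : R} (hb : IsUnit (1 + b)) :
    Ring.inverse (1 + b) = 1 - b * Ring.inverse (1 + b) :=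
  eq_sub_of_add_eq ((one_add_mul _ _).symm.trans (Ring.mul_inverse_cancel _ hb))

theorem norm_lt_one_of_norm_sq_add_le {𝕜 E F G : Type*} [NontriviallyNormedField 𝕜]
    [SeminormedAddCommGroup E] [NormedSpace 𝕜 E] [SeminormedAddCommGroup F] [NormedSpace 𝕜 F]
    [SeminormedAddCommGroup G] [NormedSpace 𝕜 G]
    {T : E →L[𝕜] F} {S : E →L[𝕜] G} {V : G →L[𝕜] E} (hV : V ∘L S = .id 𝕜 E)
    {ε : ℝ} (hε : 0 < ε) (h : ∀ x, ‖T x‖ ^ 2 + ε * ‖S x‖ ^ 2 ≤ ‖x‖ ^ 2) : ‖T‖ < 1 := by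
  set M := ‖V‖ + 1
  have hM : 0 < M := by positivity
  have S_lower_bound (x : E) : ‖x‖ ^ 2 / M ^ 2 ≤ ‖S x‖ ^ 2 := by
    rw [← div_pow]
    gcongr
    rw [div_le_iff₀' hM]
    calc ‖x‖ = ‖V (S x)‖ := by rw [← comp_apply, hV, id_apply]
      _ ≤ M * ‖S x‖ := V.le_of_opNorm_le (by simp [M]) _
  have T_bound : ‖T‖ ≤ √(1 - ε / M ^ 2) := by
    refine T.opNorm_le_bound (Real.sqrt_nonneg _) fun x ↦ ?_
    rw [← Real.sqrt_sq (norm_nonneg x), ← Real.sqrt_mul' _ (sq_nonneg _)]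
    refine Real.le_sqrt_of_sq_le ?_
    calc ‖T x‖ ^ 2 ≤ ‖x‖ ^ 2 - ε * ‖S x‖ ^ 2 := le_sub_iff_add_le.2 (h x)
      _ ≤ ‖x‖ ^ 2 - ε * (‖x‖ ^ 2 / M ^ 2) := by gcongr; exact S_lower_bound x
      _ = (1 - ε / M ^ 2) * ‖x‖ ^ 2 := by ring
  refine T_bound.trans_lt ((Real.sqrt_lt' one_pos).2 ?_)
  have : 0 < ε / M ^ 2 := by positivity
  linarith

section PositiveOperators

variable {𝕜 E F : Type*} [RCLike 𝕜]
  [NormedAddCommGroup E] [InnerProductSpace 𝕜 E] [NormedAddCommGroup F] [InnerProductSpace 𝕜 F]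

theorem norm_apply_sq_le_norm_mul_re_inner {T : E →L[𝕜] E} (hT : T.IsPositive) (x : E) :
    ‖T x‖ ^ 2 ≤ ‖T‖ * RCLike.re (inner 𝕜 (T x) x) := by
  -- For `T ≠ 0`, expand `0 ≤ re ⟪T y, y⟫` at `y = ‖T‖ x - T x`.
  rcases eq_or_ne T 0 with rfl | hT0
  · simp
  have hc : 0 < ‖T‖ := norm_pos_iff.2 hT0
  set c := ‖T‖
  have expand : RCLike.re (inner 𝕜 (T ((c : 𝕜) • x - T x)) ((c : 𝕜) • x - T x)) =
      c ^ 2 * RCLike.re (inner 𝕜 (T x) x) - 2 * c * ‖T x‖ ^ 2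
        + RCLike.re (inner 𝕜 (T (T x)) (T x)) := by
    simp only [map_sub, map_smul, inner_sub_left, inner_sub_right, inner_smul_left,
      inner_smul_right, RCLike.conj_ofReal, RCLike.re_ofReal_mul, inner_self_eq_norm_sq,
      hT.inner_left_eq_inner_right (T x) x]
    ring
  have upper : RCLike.re (inner 𝕜 (T (T x)) (T x)) ≤ c * ‖T x‖ ^ 2 := by
    calc RCLike.re (inner 𝕜 (T (T x)) (T x)) ≤ ‖T (T x)‖ * ‖T x‖ := re_inner_le_norm _ _
      _ ≤ c * ‖T x‖ * ‖T x‖ := by gcongr; exact T.le_opNorm _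
      _ = c * ‖T x‖ ^ 2 := by ring
  have nonneg := hT.re_inner_nonneg_left ((c : 𝕜) • x - T x)
  nlinarith

theorem exists_norm_one_sub_smul_lt_one {T : E →L[𝕜] E} (hT : T.IsPositive) (hu : IsUnit T) :
    ∃ t : ℝ, 0 < t ∧ ‖1 - (t : 𝕜) • T‖ < 1 := by
  obtain ⟨V, hV⟩ := hu.exists_left_inv
  set t := (‖T‖ + 1)⁻¹ with ht
  have t_pos : 0 < t := by positivity
  refine ⟨t, t_pos, norm_lt_one_of_norm_sq_add_le hV (pow_pos t_pos 2) fun x ↦ ?_⟩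
  have form_bound : t * ‖T x‖ ^ 2 ≤ RCLike.re (inner 𝕜 (T x) x) := by
    rw [ht, inv_mul_le_iff₀ (by positivity)]
    have := norm_apply_sq_le_norm_mul_re_inner hT x
    linarith [hT.re_inner_nonneg_left x]
  have expand : ‖(1 - (t : 𝕜) • T) x‖ ^ 2 =
      ‖x‖ ^ 2 - 2 * (t * RCLike.re (inner 𝕜 (T x) x)) + t ^ 2 * ‖T x‖ ^ 2 := by
    rw [sub_apply, one_apply_eq_self, smul_apply, norm_sub_sq (𝕜 := 𝕜), inner_smul_right,
      RCLike.re_ofReal_mul, norm_smul, RCLike.norm_ofReal, abs_of_pos t_pos, inner_re_symm,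
      mul_pow]
  nlinarith

open scoped ComplexOrder in
theorem eq_zero_of_comp_eq_neg_comp {P : F →L[𝕜] F} {Q : E →L[𝕜] E} {X : E →L[𝕜] F}
    (hP : P.IsPositive) (hQ : Q.IsPositive) (hu : IsUnit Q) (h : P ∘L X = -(X ∘L Q)) :
    X = 0 := by
  -- `(1 + t P) X = X (1 - t Q)`, where `1 + t P` is expansive and `1 - t Q` a strict contraction.
  obtain ⟨t, t_pos, contraction⟩ := exists_norm_one_sub_smul_lt_one hQ hu
  have htP : ((t : 𝕜) • P).IsPositive := hP.smul_of_nonneg (RCLike.ofReal_nonneg.2 t_pos.le)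
  have expansive (y : F) : ‖y‖ ≤ ‖y + (t : 𝕜) • P y‖ := by
    refine le_of_sq_le_sq ?_ (norm_nonneg _)
    rw [norm_add_sq (𝕜 := 𝕜)]
    have cross_nonneg : 0 ≤ RCLike.re (inner 𝕜 y ((t : 𝕜) • P y)) := htP.re_inner_nonneg_right y
    linarith [sq_nonneg ‖(t : 𝕜) • P y‖]
  have intertwine (x : E) : X x + (t : 𝕜) • P (X x) = X ((1 - (t : 𝕜) • Q) x) := by
    have : P (X x) = -X (Q x) := congr($h x)
    simp [this, sub_eq_add_neg]
  have self_bound : ‖X‖ ≤ ‖X‖ * ‖1 - (t : 𝕜) • Q‖ := by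
    refine X.opNorm_le_bound (by positivity) fun x ↦ ?_
    calc ‖X x‖ ≤ ‖X x + (t : 𝕜) • P (X x)‖ := expansive (X x)
      _ = ‖X ((1 - (t : 𝕜) • Q) x)‖ := by rw [intertwine]
      _ ≤ ‖X‖ * (‖1 - (t : 𝕜) • Q‖ * ‖x‖) := X.le_opNorm_of_le (le_opNorm _ x)
      _ = ‖X‖ * ‖1 - (t : 𝕜) • Q‖ * ‖x‖ := (mul_assoc _ _ _).symm
  by_contra hX
  exact self_bound.not_gt (mul_lt_of_lt_one_right (norm_pos_iff.2 hX) contraction)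

theorem comp_eq_comp_of_sq_comp_eq_comp_sq {P : F →L[𝕜] F} {Q : E →L[𝕜] E} {A : E →L[𝕜] F}
    (hP : P.IsPositive) (hQ : Q.IsPositive) (hu : IsUnit Q)
    (h : (P ∘L P) ∘L A = A ∘L (Q ∘L Q)) : P ∘L A = A ∘L Q := by
  refine sub_eq_zero.1 (eq_zero_of_comp_eq_neg_comp hP hQ hu ?_)
  rw [comp_sub, sub_comp, ← comp_assoc, h]
  simp only [comp_assoc, neg_sub]

end PositiveOperators

section MobiusMap

variable {𝕜 H K : Type*} [RCLike 𝕜]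
  [NormedAddCommGroup H] [InnerProductSpace 𝕜 H] [CompleteSpace H]
  [NormedAddCommGroup K] [InnerProductSpace 𝕜 K] [CompleteSpace K]
  {A Z : K →L[𝕜] H} {D : K →L[𝕜] K} {D' S : H →L[𝕜] H}

theorem isUnit_one_add_adjoint_comp (hA : ‖A‖ < 1) (hZ : ‖Z‖ < 1) :
    IsUnit (1 + adjoint A ∘L Z) := by
  rw [← sub_neg_eq_add]
  refine isUnit_one_sub_of_norm_lt_one ?_
  calc ‖-(adjoint A ∘L Z)‖ ≤ ‖adjoint A‖ * ‖Z‖ := by rw [norm_neg]; exact opNorm_comp_le _ _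
    _ = ‖A‖ * ‖Z‖ := by rw [LinearIsometryEquiv.norm_map]
    _ < 1 := mul_lt_one_of_nonneg_of_lt_one_left (norm_nonneg A) hA hZ.le

/-- `D` is the defect operator `(I - A*A)^{1/2}` of `A`, characterised as a positive square root.
The other defect operator `(I - AA*)^{1/2}` is the one of `adjoint A`. -/
structure IsDefectOperator (A : K →L[𝕜] H) (D : K →L[𝕜] K) : Prop where
  isPositive : D.IsPositive
  comp_self : D ∘L D = 1 - adjoint A ∘L A

namespace IsDefectOperator

theorem neg (hD : IsDefectOperator A D) : IsDefectOperator (-A) D :=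
  ⟨hD.isPositive, by simp [hD.comp_self]⟩

theorem isUnit (hD : IsDefectOperator A D) (hA : ‖A‖ < 1) : IsUnit D := by
  have hDD : IsUnit (D * D) := by
    rw [mul_def, hD.comp_self, sub_eq_add_neg, ← comp_neg]
    exact isUnit_one_add_adjoint_comp hA (by rwa [norm_neg])
  exact isUnit_mul_self_iff.1 hDD

theorem norm_sq_apply (hD : IsDefectOperator A D) (x : K) :
    ‖D x‖ ^ 2 = ‖x‖ ^ 2 - ‖A x‖ ^ 2 := by
  rw [apply_norm_sq_eq_inner_adjoint_left, hD.isPositive.isSelfAdjoint.adjoint_eq, hD.comp_self,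
    sub_apply, inner_sub_left, map_sub, ← apply_norm_sq_eq_inner_adjoint_left, one_apply_eq_self,
    inner_self_eq_norm_sq]

theorem comp_eq_comp (hD : IsDefectOperator A D) (hD' : IsDefectOperator (adjoint A) D')
    (hA : ‖A‖ < 1) : D' ∘L A = A ∘L D := by
  refine comp_eq_comp_of_sq_comp_eq_comp_sq hD'.isPositive hD.isPositive (hD.isUnit hA) ?_
  rw [hD.comp_self, hD'.comp_self, adjoint_adjoint, sub_comp, comp_sub, comp_assoc]
  rfl

theorem comp_adjoint_eq_adjoint_comp (hD : IsDefectOperator A D)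
    (hD' : IsDefectOperator (adjoint A) D') (hA : ‖A‖ < 1) : D ∘L adjoint A = adjoint A ∘L D' :=
  comp_eq_comp hD' (by rwa [adjoint_adjoint]) (by rwa [LinearIsometryEquiv.norm_map])

theorem norm_sq_julia (hD : IsDefectOperator A D) (hD' : IsDefectOperator (adjoint A) D')
    (hA : ‖A‖ < 1) (x : K) (z : H) :
    ‖A x + D' z‖ ^ 2 + ‖D x - adjoint A z‖ ^ 2 = ‖x‖ ^ 2 + ‖z‖ ^ 2 := by
  have cross_terms : inner 𝕜 (D x) (adjoint A z) = inner 𝕜 (A x) (D' z) :=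
    calc inner 𝕜 (D x) (adjoint A z) = inner 𝕜 (A (D x)) z := adjoint_inner_right _ _ _
      _ = inner 𝕜 (D' (A x)) z := by rw [← comp_apply A, ← hD.comp_eq_comp hD' hA]; rfl
      _ = inner 𝕜 (A x) (D' z) := hD'.isPositive.inner_left_eq_inner_right _ _
  rw [norm_add_sq (𝕜 := 𝕜), norm_sub_sq (𝕜 := 𝕜), cross_terms, hD.norm_sq_apply,
    hD'.norm_sq_apply]
  ring

end IsDefectOperator

/-- The Möbius map `Z ↦ (I - AA*)^{-1/2} (Z + A) (I + A*Z)⁻¹ (I - A*A)^{1/2}`, with `S` in place of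
`(I - AA*)^{-1/2}` and `D` in place of `(I - A*A)^{1/2}`. The inverse is `Ring.inverse`, which is
`0` if `I + A*Z` is not invertible. -/
noncomputable def mobiusMap (A : K →L[𝕜] H) (S : H →L[𝕜] H) (D : K →L[𝕜] K) (Z : K →L[𝕜] H) :
    K →L[𝕜] H :=
  S ∘L (Z + A) ∘L Ring.inverse (1 + adjoint A ∘L Z) ∘L D

theorem mobiusMap_neg (A : K →L[𝕜] H) (S : H →L[𝕜] H) (D : K →L[𝕜] K) (Z : K →L[𝕜] H) :
    mobiusMap (-A) S D Z = S ∘L (Z - A) ∘L Ring.inverse (1 - adjoint A ∘L Z) ∘L D := by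
  simp only [mobiusMap, map_neg, neg_comp, ← sub_eq_add_neg]

theorem mobiusMap_apply_eq_add (hA : ‖A‖ < 1) (hD : IsDefectOperator A D)
    (hD' : IsDefectOperator (adjoint A) D') (hS : S ∘L D' = 1) (hZ : ‖Z‖ < 1) (x : K) :
    mobiusMap A S D Z x = A x + D' (Z (Ring.inverse (1 + adjoint A ∘L Z) (D x))) := by
  set W := Ring.inverse (1 + adjoint A ∘L Z)
  have hW : W (D x) = D x - adjoint A (Z (W (D x))) :=
    congr($(inverse_one_add_eq_one_sub (isUnit_one_add_adjoint_comp hA hZ)) (D x))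
  have intertwine : A (D x) = D' (A x) := congr($(hD.comp_eq_comp hD' hA) x).symm
  have sq_D' (z : H) : D' (D' z) = z - A (adjoint A z) := by
    simpa using congr($hD'.comp_self z)
  have factor_D' : Z (W (D x)) + A (W (D x)) = D' (A x + D' (Z (W (D x)))) :=
    calc Z (W (D x)) + A (W (D x))
        = Z (W (D x)) + (A (D x) - A (adjoint A (Z (W (D x))))) := by
          rw [← map_sub, ← hW]
      _ = D' (A x + D' (Z (W (D x)))) := by rw [map_add, sq_D', intertwine]; abel
  calc mobiusMap A S D Z x = S (Z (W (D x)) + A (W (D x))) := rfl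
    _ = S (D' (A x + D' (Z (W (D x))))) := by rw [factor_D']
    _ = A x + D' (Z (W (D x))) := congr($hS _)

theorem one_sub_adjoint_comp_mobiusMap (hA : ‖A‖ < 1) (hD : IsDefectOperator A D)
    (hD' : IsDefectOperator (adjoint A) D') (hS : S ∘L D' = 1) (hZ : ‖Z‖ < 1) :
    1 - adjoint A ∘L mobiusMap A S D Z = D * Ring.inverse (1 + adjoint A ∘L Z) * D := by
  ext x
  set W := Ring.inverse (1 + adjoint A ∘L Z)
  have hW : W (D x) = D x - adjoint A (Z (W (D x))) :=
    congr($(inverse_one_add_eq_one_sub (isUnit_one_add_adjoint_comp hA hZ)) (D x))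
  have intertwine (z : H) : adjoint A (D' z) = D (adjoint A z) :=
    congr($(hD.comp_adjoint_eq_adjoint_comp hD' hA) z).symm
  have sq_D : D (D x) = x - adjoint A (A x) := congr($hD.comp_self x)
  calc x - adjoint A (mobiusMap A S D Z x)
      = x - adjoint A (A x) - adjoint A (D' (Z (W (D x)))) := by
        rw [mobiusMap_apply_eq_add hA hD hD' hS hZ, map_add, sub_add_eq_sub_sub]
    _ = D (D x - adjoint A (Z (W (D x)))) := by rw [← sq_D, intertwine, map_sub]
    _ = D (W (D x)) := by rw [← hW]

theorem norm_mobiusMap_lt_one (hA : ‖A‖ < 1) (hD : IsDefectOperator A D)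
    (hD' : IsDefectOperator (adjoint A) D') (hS : S ∘L D' = 1) (hZ : ‖Z‖ < 1) :
    ‖mobiusMap A S D Z‖ < 1 := by
  have hu := isUnit_one_add_adjoint_comp hA hZ
  set W := Ring.inverse (1 + adjoint A ∘L Z)
  obtain ⟨V, hV⟩ := (hu.ringInverse.mul (hD.isUnit hA)).exists_left_inv
  have hε : 0 < 1 - ‖Z‖ ^ 2 := sub_pos.2 (pow_lt_one₀ (norm_nonneg Z) hZ two_ne_zero)
  refine norm_lt_one_of_norm_sq_add_le hV hε fun x ↦ ?_
  have julia : ‖mobiusMap A S D Z x‖ ^ 2 + ‖W (D x)‖ ^ 2 = ‖x‖ ^ 2 + ‖Z (W (D x))‖ ^ 2 := by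
    have hW : W (D x) = D x - adjoint A (Z (W (D x))) :=
      congr($(inverse_one_add_eq_one_sub hu) (D x))
    rw [mobiusMap_apply_eq_add hA hD hD' hS hZ, ← hD.norm_sq_julia hD' hA x (Z (W (D x))), ← hW]
  have Z_bound : ‖Z (W (D x))‖ ^ 2 ≤ ‖Z‖ ^ 2 * ‖W (D x)‖ ^ 2 := by
    rw [← mul_pow]
    gcongr
    exact Z.le_opNorm _
  change ‖mobiusMap A S D Z x‖ ^ 2 + (1 - ‖Z‖ ^ 2) * ‖W (D x)‖ ^ 2 ≤ ‖x‖ ^ 2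
  linarith

theorem mobiusMap_neg_mobiusMap (hA : ‖A‖ < 1) (hD : IsDefectOperator A D)
    (hD' : IsDefectOperator (adjoint A) D') (hS : S ∘L D' = 1) (hZ : ‖Z‖ < 1) :
    mobiusMap (-A) S D (mobiusMap A S D Z) = Z := by
  have hDu := hD.isUnit hA
  have hWu := (isUnit_one_add_adjoint_comp hA hZ).ringInverse
  have mobiusMap_sub : mobiusMap A S D Z - A =
      D' ∘L Z ∘L Ring.inverse (1 + adjoint A ∘L Z) ∘L D := by
    ext x
    simp [mobiusMap_apply_eq_add hA hD hD' hS hZ]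
  rw [mobiusMap_neg, mobiusMap_sub, one_sub_adjoint_comp_mobiusMap hA hD hD' hS hZ]
  set W := Ring.inverse (1 + adjoint A ∘L Z)
  have cancel : W * D * Ring.inverse (D * W * D) * D = 1 := by
    refine hDu.mul_left_cancel ?_
    rw [← mul_assoc, ← mul_assoc, ← mul_assoc, Ring.mul_inverse_cancel _ ((hDu.mul hWu).mul hDu),
      one_mul, mul_one]
  calc S ∘L (D' ∘L Z ∘L W ∘L D) ∘L Ring.inverse (D * W * D) ∘L D
      = (S ∘L D') ∘L Z ∘L (W * D * Ring.inverse (D * W * D) * D) := rfl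
    _ = Z := by rw [hS, cancel]; rfl

theorem mobius_map_biject_general (A : K →L[𝕜] H) (hA : ‖A‖ < 1)
    (P Pinv : H →L[𝕜] H) (hP : IsDefectOperator (adjoint A) P) (hPinv : Pinv ∘L P = 1)
    (Q : K →L[𝕜] K) (hQ : IsDefectOperator A Q) :
    Set.MapsTo (mobiusMap A Pinv Q) (Metric.ball 0 1) (Metric.ball 0 1) ∧
    Set.MapsTo (mobiusMap (-A) Pinv Q) (Metric.ball 0 1) (Metric.ball 0 1) ∧
    Set.InvOn (mobiusMap (-A) Pinv Q) (mobiusMap A Pinv Q) (Metric.ball 0 1) (Metric.ball 0 1) := by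
  have hA_neg : ‖-A‖ < 1 := by rwa [norm_neg]
  have hP_neg : IsDefectOperator (adjoint (-A)) P := by rw [map_neg]; exact hP.neg
  simp only [Set.MapsTo, Set.InvOn, Set.LeftInvOn, Set.RightInvOn, mem_ball_zero_iff]
  refine ⟨fun Z hZ ↦ norm_mobiusMap_lt_one hA hQ hP hPinv hZ,
    fun Z hZ ↦ norm_mobiusMap_lt_one hA_neg hQ.neg hP_neg hPinv hZ,
    fun Z hZ ↦ mobiusMap_neg_mobiusMap hA hQ hP hPinv hZ, fun Z hZ ↦ ?_⟩
  simpa only [neg_neg] using mobiusMap_neg_mobiusMap hA_neg hQ.neg hP_neg hPinv hZ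

end MobiusMap

/-- Let `𝓑` be the open unit ball of `B(K,H)` and `A ∈ 𝓑`. With
`P = (I − AA*)^{1/2}` (with inverse `Pinv = (I − AA*)^{−1/2}`) and `Q = (I − A*A)^{1/2}`
(with inverse `Qinv`), the Möbius map
`η(Z) = (I − AA*)^{−1/2}(Z + A)(I + A*Z)⁻¹(I − A*A)^{1/2}` maps `𝓑` bijectively onto `𝓑`,
with inverse `η⁻¹(Z) = (I − AA*)^{−1/2}(Z − A)(I − A*Z)⁻¹(I − A*A)^{1/2}`. -/
theorem mobius_map_biject
    {H K : Type*} [NormedAddCommGroup H] [InnerProductSpace ℂ H] [CompleteSpace H]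
    [NormedAddCommGroup K] [InnerProductSpace ℂ K] [CompleteSpace K]
    (A : K →L[ℂ] H) (hA : ‖A‖ < 1)
    (P Pinv : H →L[ℂ] H) (hP : P.IsPositive) (hP2 : P ∘L P = 1 - A ∘L adjoint A)
    (hPinv₁ : P ∘L Pinv = 1) (hPinv₂ : Pinv ∘L P = 1)
    (Q : K →L[ℂ] K) (hQ : Q.IsPositive) (hQ2 : Q ∘L Q = 1 - adjoint A ∘L A) :
    (∀ Z : K →L[ℂ] H, ‖Z‖ < 1 →
        ‖Pinv ∘L (Z + A) ∘L Ring.inverse (1 + adjoint A ∘L Z) ∘L Q‖ < 1) ∧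
    (∀ Z : K →L[ℂ] H, ‖Z‖ < 1 →
        ‖Pinv ∘L (Z - A) ∘L Ring.inverse (1 - adjoint A ∘L Z) ∘L Q‖ < 1) ∧
    (∀ Z : K →L[ℂ] H, ‖Z‖ < 1 →
        Pinv ∘L ((Pinv ∘L (Z - A) ∘L Ring.inverse (1 - adjoint A ∘L Z) ∘L Q) + A) ∘L
            Ring.inverse (1 + adjoint A ∘L
              (Pinv ∘L (Z - A) ∘L Ring.inverse (1 - adjoint A ∘L Z) ∘L Q)) ∘L Q = Z) ∧
    (∀ Z : K →L[ℂ] H, ‖Z‖ < 1 →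
        Pinv ∘L ((Pinv ∘L (Z + A) ∘L Ring.inverse (1 + adjoint A ∘L Z) ∘L Q) - A) ∘L
            Ring.inverse (1 - adjoint A ∘L
              (Pinv ∘L (Z + A) ∘L Ring.inverse (1 + adjoint A ∘L Z) ∘L Q)) ∘L Q = Z) := by
  have hPA : IsDefectOperator (adjoint A) P := ⟨hP, by rw [adjoint_adjoint, hP2]⟩
  obtain ⟨maps, maps_neg, left_inv, right_inv⟩ :=
    mobius_map_biject_general A hA P Pinv hPA hPinv₂ Q ⟨hQ, hQ2⟩
  simp only [Set.MapsTo, Set.LeftInvOn, Set.RightInvOn, mem_ball_zero_iff, mobiusMap_neg]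
    at maps maps_neg left_inv right_inv
  exact ⟨@maps, @maps_neg, @right_inv, @left_inv⟩
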